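/- Let G be a finite supersolvable group and χ ∈ Irr(G) with χ(1) > 1. Then χ(1) is a product of at most η(χ) − 1 primes (counted with multiplicity). -/

import Mathlib

open scoped Classical BigOperators

/-- Inner product of class functions on a finite group. -/
noncomputable def charInner (G : Type) [Group G] [Fintype G] (φ ψ : G → ℂ) : ℂ :=
  (Fintype.card G : ℂ)⁻¹ * ∑ g : G, φ g * (starRingEnd ℂ) (ψ g)

/-- `χ` is the character of an irreducible complex representation of `G`. -/
def IsIrrChar (G : Type) [Group G] [Fintype G] (χ : G → ℂ) : Prop :=
  ∃ V : FDRep ℂ G, CategoryTheory.Simple V ∧ V.character = χ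

/-- The number of distinct non-principal irreducible constituents of `χ ⬝ conj χ`. -/
noncomputable def etaChar (G : Type) [Group G] [Fintype G] (χ : G → ℂ) : ℕ :=
  Set.ncard {α : G → ℂ | IsIrrChar G α ∧ α ≠ (fun _ => 1) ∧
    charInner G (fun g => χ g * (starRingEnd ℂ) (χ g)) α ≠ 0}

/-- Kernel of a character, as a set. -/
def charKer (G : Type) [Group G] (χ : G → ℂ) : Set G := {g | χ g = χ 1}

/-- Induced character from a subgroup. -/
noncomputable def indChar (K : Type) [Group K] [Fintype K] (H : Subgroup K) (φ : H → ℂ) :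
    K → ℂ := fun k =>
  (Nat.card H : ℂ)⁻¹ * ∑ x : K, if h : x⁻¹ * k * x ∈ H then φ ⟨x⁻¹ * k * x, h⟩ else 0


/-- Derived length of a group. -/
noncomputable def derivedLength (G : Type) [Group G] : ℕ :=
  sInf {n | derivedSeries G n = ⊥}

/-- A finite group is supersolvable if it has a chain of normal subgroups of `G`
from `⊥` to `⊤` with cyclic factors. -/
def IsSupersolvableGroup (G : Type) [Group G] : Prop :=
  ∃ (n : ℕ) (H : Fin (n + 1) → Subgroup G),
    (∀ i, (H i).Normal) ∧ Monotone H ∧ H 0 = ⊥ ∧ H (Fin.last n) = ⊤ ∧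
    ∀ i : Fin n, ∃ g ∈ H i.succ, H i.succ ≤ H i.castSucc ⊔ Subgroup.zpowers g


section RepBasics

variable {G : Type*} [Group G] {V : Type*} [AddCommGroup V] [Module ℂ V]

/-- `U` is stable under the subgroup `N`. -/
def RInv (ρ : Representation ℂ G V) (N : Subgroup G) (U : Submodule ℂ V) : Prop :=
  ∀ n ∈ N, ∀ u ∈ U, ρ n u ∈ U

/-- `U` is a simple `N`-submodule. -/
structure RSimp (ρ : Representation ℂ G V) (N : Subgroup G) (U : Submodule ℂ V) : Prop where
  inv : RInv ρ N U
  ne : U ≠ ⊥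
  simple : ∀ S ≤ U, RInv ρ N S → S = ⊥ ∨ S = U

theorem maschke_proj [Finite G] (ρ : Representation ℂ G V) (N : Subgroup G) (U : Submodule ℂ V)
    (h : RInv ρ N U) : ∃ π : V →ₗ[ℂ] V, (∀ n ∈ N, ∀ v, π (ρ n v) = ρ n (π v)) ∧
      (∀ v, π v ∈ U) ∧ ∀ u ∈ U, π u = u := by
  have := Fintype.ofFinite N
  obtain ⟨q, hq⟩ := U.exists_isCompl
  obtain ⟨P, hP1, hP2⟩ : ∃ P : V →ₗ[ℂ] V, (∀ v, P v ∈ U) ∧ ∀ u ∈ U, P u = u := by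
    obtain ⟨g, hg⟩ := LinearMap.exists_leftInverse_of_injective U.subtype (by simp)
    refine ⟨U.subtype ∘ₗ g, fun v => by simp, fun u hu => ?_⟩
    have := LinearMap.congr_fun hg ⟨u, hu⟩
    simp at this
    simp [this]
  have hc : (Fintype.card N : ℂ) ≠ 0 := by simp
  refine ⟨(Fintype.card N : ℂ)⁻¹ • ∑ n : N, (ρ n) ∘ₗ P ∘ₗ (ρ (n⁻¹ : N)), ?_, ?_, ?_⟩
  · intro m hm v
    simp only [LinearMap.smul_apply, LinearMap.sum_apply, LinearMap.comp_apply, map_smul, map_sum]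
    congr 1
    refine Fintype.sum_equiv (Equiv.mulLeft (⟨m, hm⟩⁻¹ : N)) _ _ fun n => ?_
    have : m * (m⁻¹ * (n : G)) = n := by group
    have h2 : ρ m (ρ (m⁻¹ * (n : G)) (P (ρ ((n : G)⁻¹ * m) v))) = ρ n (P (ρ ((n : G)⁻¹ * m) v)) := by
      rw [← Module.End.mul_apply (ρ m), ← map_mul, this]
    simp [← Module.End.mul_apply (ρ ((n : G)⁻¹)), ← map_mul, h2]
  · intro v
    simp only [LinearMap.smul_apply, LinearMap.sum_apply, LinearMap.comp_apply]
    exact U.smul_mem _ (U.sum_mem fun n _ => h n n.2 _ (hP1 _))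
  · intro u hu
    simp only [LinearMap.smul_apply, LinearMap.sum_apply, LinearMap.comp_apply]
    have : ∀ n : N, ρ n (P (ρ (n⁻¹ : N) u)) = u := fun n => by
      rw [hP2 _ (h _ (n⁻¹).2 _ hu)]
      simp [← Module.End.mul_apply, ← map_mul]
    simp only [this]
    simp [← Nat.cast_smul_eq_nsmul ℂ, smul_smul]

theorem rinv_sup_of_gen [Finite G] (ρ : Representation ℂ G V) (M : Subgroup G) [M.Normal] (x : G)
    (S : Submodule ℂ V) (h : RInv ρ M S)
    (hx : ∀ u ∈ S, ρ x u ∈ S) : RInv ρ (M ⊔ Subgroup.zpowers x) S := by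
  intro n hn u hu
  rw [Subgroup.mem_sup_of_normal_left] at hn
  obtain ⟨m, hm, y, hy, rfl⟩ := hn
  rw [← mem_powers_iff_mem_zpowers] at hy
  obtain ⟨k, rfl⟩ := hy
  rw [map_mul]
  refine h m hm _ ?_
  clear * - hx hu
  simp only [map_pow]
  induction k with
  | zero => simpa
  | succ k ih => rw [pow_succ']; exact hx _ ih

theorem rinv_top_of_gen [Finite G] (ρ : Representation ℂ G V) (M : Subgroup G) [M.Normal] (x : G)
    (hgen : M ⊔ Subgroup.zpowers x = ⊤) (S : Submodule ℂ V) (h : RInv ρ M S)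
    (hx : ∀ u ∈ S, ρ x u ∈ S) : RInv ρ ⊤ S :=
  hgen ▸ rinv_sup_of_gen ρ M x S h hx

/-- Schur's lemma, for an irreducible representation. -/
theorem schur_scalar [FiniteDimensional ℂ V] (ρ : Representation ℂ G V) (hs : RSimp ρ ⊤ ⊤)
    (f : V →ₗ[ℂ] V) (hf : ∀ g v, f (ρ g v) = ρ g (f v)) : ∃ c : ℂ, ∀ v, f v = c • v := by
  have : Nontrivial V := by
    by_contra hn
    rw [not_nontrivial_iff_subsingleton] at hn
    exact hs.ne (Subsingleton.elim _ _)
  obtain ⟨c, hc⟩ := Module.End.exists_eigenvalue f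
  refine ⟨c, ?_⟩
  rcases hs.simple (Module.End.eigenspace f c) le_top (by
    intro n _ u hu
    rw [Module.End.mem_eigenspace_iff] at hu ⊢
    rw [hf, hu, map_smul]) with h | h
  · exact absurd h hc
  · intro v
    rw [← Module.End.mem_eigenspace_iff, h]
    trivial

/-- A finite order operator other than the identity has an eigenvalue other than one. -/
theorem exists_eigen_ne_one {A : Type*} [AddCommGroup A] [Module ℂ A] [FiniteDimensional ℂ A]
    (T : A →ₗ[ℂ] A) (p : ℕ) (hp : p ≠ 0) (hT : T ^ p = 1) (h1 : T ≠ 1) :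
    ∃ μ : ℂ, μ ≠ 1 ∧ μ ^ p = 1 ∧ ∃ v ≠ 0, T v = μ • v := by
  set R : Submodule ℂ A := LinearMap.range (T - 1)
  have hR : ∀ v ∈ R, T v ∈ R := by
    rintro _ ⟨v, rfl⟩
    exact ⟨T v, by simp⟩
  have hnt : Nontrivial R := by
    rw [Submodule.nontrivial_iff_ne_bot]
    intro h
    rw [LinearMap.range_eq_bot, sub_eq_zero] at h
    exact h1 h
  obtain ⟨μ, hμ⟩ := Module.End.exists_eigenvalue (T.restrict hR)
  obtain ⟨⟨v, hv⟩, hve⟩ := hμ.exists_hasEigenvector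
  have h2 : T v = μ • v := congrArg Subtype.val hve.apply_eq_smul
  have h3 : v ≠ 0 := fun h => hve.2 (Subtype.ext h)
  refine ⟨μ, ?_, ?_, v, h3, h2⟩
  · rintro rfl
    obtain ⟨w, hw⟩ := hv
    have hw' : T w = w + v := by rw [← hw]; simp
    have : ∀ k : ℕ, (T ^ k) w = w + k • v := by
      intro k
      induction k with
      | zero => simp
      | succ k ih =>
        rw [pow_succ', Module.End.mul_apply, ih, map_add, map_nsmul, h2, hw', one_smul, succ_nsmul]
        abel
    have h := this p
    rw [hT] at h
    simp only [Module.End.one_apply, left_eq_add, ← Nat.cast_smul_eq_nsmul ℂ, smul_eq_zero,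
      Nat.cast_eq_zero] at h
    tauto
  · have : ∀ k : ℕ, (T ^ k) v = μ ^ k • v := by
      intro k
      induction k with
      | zero => simp
      | succ k ih => rw [pow_succ', Module.End.mul_apply, ih, map_smul, h2, smul_smul, pow_succ]
    have h := this p
    rw [hT] at h
    simp only [Module.End.one_apply] at h
    have h4 : (μ ^ p - 1) • v = 0 := by rw [sub_smul, ← h, one_smul, sub_self]
    rcases smul_eq_zero.1 h4 with h5 | h5
    · exact sub_eq_zero.1 h5
    · exact absurd h5 h3

end RepBasics

theorem clifford_dim {G : Type*} [Group G] [Finite G] {W : Type*} [AddCommGroup W] [Module ℂ W]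
    [FiniteDimensional ℂ W] (ρ : Representation ℂ G W) (M : Subgroup G) [hM : M.Normal] (x : G)
    (hgen : M ⊔ Subgroup.zpowers x = ⊤) (p : ℕ) (hp : p.Prime) (hxp : x ^ p ∈ M)
    (hs : RSimp ρ ⊤ ⊤) (a : W →ₗ[ℂ] W) (ξ μ : ℂ) (hξ : IsPrimitiveRoot ξ p) (hμ : μ ≠ 0)
    (hax : ∀ v, a (ρ x v) = ξ • ρ x (a v))
    (S : Submodule ℂ W) (hS : S ≤ Module.End.eigenspace a μ) (hS0 : S ≠ ⊥) (hSi : RInv ρ M S) :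
    Module.finrank ℂ W = p * Module.finrank ℂ S := by
  have hxi : ∀ k : ℕ, ∀ v, a (ρ (x ^ k) v) = ξ ^ k • ρ (x ^ k) (a v) := by
    intro k
    induction k with
    | zero => simp
    | succ k ih =>
      intro v
      rw [pow_succ', map_mul, Module.End.mul_apply, hax, ih, map_smul, smul_smul, pow_succ']
      rfl
  set F : ℕ → Submodule ℂ W := fun i => S.map (ρ (x ^ i)) with hF
  have hFE : ∀ i, F i ≤ Module.End.eigenspace a (ξ ^ i * μ) := by
    rintro i _ ⟨v, hv, rfl⟩
    have := hS hv
    rw [Module.End.mem_eigenspace_iff] at this ⊢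
    rw [hxi, this, map_smul, smul_smul]
  have hFp : ∀ i, F i ≤ F (i % p) := by
    rintro i _ ⟨v, hv, rfl⟩
    refine ⟨ρ ((x ^ p) ^ (i / p)) v, hSi _ (M.pow_mem hxp _) _ hv, ?_⟩
    rw [← Module.End.mul_apply, ← map_mul, ← pow_mul, ← pow_add, Nat.mod_add_div]
  have htop : (⨆ i, F i) = ⊤ := by
    have hinv : RInv ρ ⊤ (⨆ i, F i) := by
      apply rinv_top_of_gen ρ M x hgen
      · intro n hn u hu
        suffices (⨆ i, F i) ≤ (⨆ i, F i).comap (ρ n) from this hu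
        refine iSup_le fun i => ?_
        rintro _ ⟨v, hv, rfl⟩
        refine (le_iSup F i) ⟨ρ ((x ^ i)⁻¹ * n * x ^ i) v, hSi _ ?_ _ hv, ?_⟩
        · simpa using hM.conj_mem n hn (x ^ i)⁻¹
        · rw [← Module.End.mul_apply, ← map_mul, ← Module.End.mul_apply, ← map_mul]
          congr 2
          group
      · intro u hu
        suffices (⨆ i, F i) ≤ (⨆ i, F i).comap (ρ x) from this hu
        refine iSup_le fun i => ?_
        rintro _ ⟨v, hv, rfl⟩
        refine (le_iSup F (i + 1)) ⟨v, hv, ?_⟩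
        rw [pow_succ', map_mul]; rfl
    rcases hs.simple _ le_top hinv with h | h
    · exfalso
      apply hS0
      rw [eq_bot_iff, ← h]
      refine le_trans ?_ (le_iSup F 0)
      intro v hv
      exact ⟨v, hv, by simp⟩
    · exact h
  have htop' : (⨆ i : Fin p, F i) = ⊤ := by
    rw [eq_top_iff, ← htop]
    exact iSup_le fun i => (hFp i).trans
      (le_iSup (fun i : Fin p => F i) ⟨i % p, Nat.mod_lt _ hp.pos⟩)
  have hind : iSupIndep (fun i : Fin p => F i) := by
    have h1 := (Module.End.eigenspaces_iSupIndep a).comp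
      (f := fun i : Fin p => ξ ^ (i : ℕ) * μ) (by
        intro i j hij
        have := mul_right_cancel₀ hμ hij
        exact Fin.ext (hξ.pow_inj i.2 j.2 this))
    exact h1.mono fun i => hFE i
  have hint := DirectSum.isInternal_submodule_of_iSupIndep_of_iSup_eq_top hind htop'
  have e := LinearEquiv.ofBijective (DirectSum.coeLinearMap (fun i : Fin p => F i)) hint
  rw [← e.finrank_eq, Module.finrank_directSum]
  have : ∀ i, Module.finrank ℂ (F i) = Module.finrank ℂ S := by
    intro i
    refine (LinearEquiv.finrank_eq (Submodule.equivMapOfInjective (ρ (x ^ i)) ?_ S)).symm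
    refine Function.LeftInverse.injective (g := ρ (x ^ i)⁻¹) fun v => ?_
    rw [← Module.End.mul_apply, ← map_mul]
    simp
  simp [this]

theorem clifford_key {G : Type*} [Group G] [Finite G] {W : Type*} [AddCommGroup W] [Module ℂ W]
    [FiniteDimensional ℂ W] (ρ : Representation ℂ G W) (M : Subgroup G) [hM : M.Normal] (x : G)
    (hgen : M ⊔ Subgroup.zpowers x = ⊤) (p : ℕ) (hp : p.Prime) (hxp : x ^ p ∈ M)
    (hs : RSimp ρ ⊤ ⊤) (hns : ¬ RSimp ρ M ⊤) :
    ∃ a : W →ₗ[ℂ] W, (∀ m ∈ M, ∀ v, a (ρ m v) = ρ m (a v)) ∧ (∃ v, a (ρ x v) ≠ ρ x (a v)) ∧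
      ∃ U : Submodule ℂ W, RSimp ρ M U ∧ Module.finrank ℂ W = p * Module.finrank ℂ U := by
  have hnt : Nontrivial W := by
    by_contra hn
    rw [not_nontrivial_iff_subsingleton] at hn
    exact hs.ne (Subsingleton.elim _ _)
  have hcancel : ∀ g v, ρ g (ρ g⁻¹ v) = v := fun g v => by
    rw [← Module.End.mul_apply, ← map_mul]; simp
  have hcancel' : ∀ g v, ρ g⁻¹ (ρ g v) = v := fun g v => by
    rw [← Module.End.mul_apply, ← map_mul]; simp
  let A : Submodule ℂ (W →ₗ[ℂ] W) :=
    { carrier := {f | ∀ m ∈ M, ∀ v, f (ρ m v) = ρ m (f v)}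
      add_mem' := by
        intro f g hf hg m hm v
        simp [hf m hm v, hg m hm v]
      zero_mem' := by intro m hm v; simp
      smul_mem' := by
        intro c f hf m hm v
        simp [hf m hm v] }
  have hA : ∀ f ∈ A, Representation.linHom ρ ρ x f ∈ A := by
    intro f hf m hm v
    simp only [Representation.linHom_apply, LinearMap.comp_apply]
    have h1 := hf (x⁻¹ * m * x) (by simpa using hM.conj_mem m hm x⁻¹) (ρ x⁻¹ v)
    simp only [map_mul, Module.End.mul_apply, hcancel] at h1
    rw [h1, hcancel]
  set T : A →ₗ[ℂ] A := (Representation.linHom ρ ρ x).restrict hA with hT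
  have hTp : T ^ p = 1 := by
    ext1 f
    apply Subtype.ext
    rw [hT, Module.End.pow_restrict, LinearMap.coe_restrict_apply, ← map_pow]
    ext v
    simp only [Representation.linHom_apply, LinearMap.comp_apply, Module.End.one_apply]
    rw [f.2 _ (M.inv_mem hxp), hcancel]
  have hT1 : T ≠ 1 := by
    intro h1
    apply hns
    refine ⟨fun _ _ _ _ => trivial, hs.ne, fun S hS hSi => ?_⟩
    refine hs.simple S hS (rinv_top_of_gen ρ M x hgen S hSi ?_)
    obtain ⟨π, h2, h3, h4⟩ := maschke_proj ρ M S hSi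
    have h5 : T ⟨π, h2⟩ = ⟨π, h2⟩ := by rw [h1]; rfl
    have h6 : Representation.linHom ρ ρ x π = π := congrArg Subtype.val h5
    intro u hu
    have h7 := LinearMap.congr_fun h6 (ρ x u)
    simp only [Representation.linHom_apply, LinearMap.comp_apply, hcancel', h4 u hu] at h7
    rw [h7]
    exact h3 _
  obtain ⟨ζ, hζ1, hζp, ⟨a, haA⟩, ha0, haT⟩ := exists_eigen_ne_one T p hp.ne_zero hTp hT1
  have ha0 : a ≠ 0 := fun h => ha0 (Subtype.ext h)
  have hζ0 : ζ ≠ 0 := by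
    rintro rfl
    simp [hp.ne_zero] at hζp
  have haT' : Representation.linHom ρ ρ x a = ζ • a := congrArg Subtype.val haT
  have hax1 : ∀ v, ρ x (a v) = ζ • a (ρ x v) := by
    intro v
    have h7 := LinearMap.congr_fun haT' (ρ x v)
    simpa only [Representation.linHom_apply, LinearMap.comp_apply, hcancel',
      LinearMap.smul_apply] using h7
  have hax : ∀ v, a (ρ x v) = ζ⁻¹ • ρ x (a v) := by
    intro v
    rw [hax1, smul_smul, inv_mul_cancel₀ hζ0, one_smul]
  have hξ : IsPrimitiveRoot ζ⁻¹ p := by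
    have : Fact p.Prime := ⟨hp⟩
    have h := orderOf_eq_prime (x := ζ⁻¹) (p := p) (by rw [inv_pow, hζp, inv_one])
      (by simpa using hζ1)
    rw [← h]
    exact IsPrimitiveRoot.orderOf _
  have hker : LinearMap.ker a = ⊥ := by
    rcases hs.simple (LinearMap.ker a) le_top (rinv_top_of_gen ρ M x hgen _ (by
      intro n hn u hu
      rw [LinearMap.mem_ker] at hu ⊢
      rw [haA n hn, hu, map_zero]) (by
      intro u hu
      rw [LinearMap.mem_ker] at hu ⊢
      rw [hax, hu, map_zero, smul_zero])) with h | h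
    · exact h
    · exact absurd (LinearMap.ker_eq_top.1 h) ha0
  obtain ⟨μ, hμ⟩ := Module.End.exists_eigenvalue a
  have hμ0 : μ ≠ 0 := by
    rintro rfl
    apply hμ
    simpa using hker
  have hEi : RInv ρ M (Module.End.eigenspace a μ) := by
    intro n hn u hu
    rw [Module.End.mem_eigenspace_iff] at hu ⊢
    rw [haA n hn, hu, map_smul]
  have hdim := clifford_dim ρ M x hgen p hp hxp hs a ζ⁻¹ μ hξ hμ0 hax
  refine ⟨a, haA, ?_, Module.End.eigenspace a μ, ⟨hEi, hμ, ?_⟩, hdim _ le_rfl hμ hEi⟩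
  · by_contra! hc
    apply ha0
    ext v
    have h1 := hc (ρ x⁻¹ v)
    rw [hax1, hcancel] at h1
    have h2 : (ζ - 1) • a v = 0 := by rw [sub_smul, one_smul, ← h1, sub_self]
    simpa [sub_eq_zero, hζ1] using h2
  · intro S hS hSi
    by_cases h0 : S = ⊥
    · exact Or.inl h0
    · right
      have h1 := hdim S hS h0 hSi
      rw [hdim _ le_rfl hμ hEi] at h1
      exact Submodule.eq_of_le_of_finrank_eq hS (Nat.eq_of_mul_eq_mul_left hp.pos h1).symm

/-- Restriction of a representation to a subgroup and a stable submodule. -/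
def subRep {G : Type*} [Group G] {V : Type*} [AddCommGroup V] [Module ℂ V]
    (ρ : Representation ℂ G V) (N : Subgroup G) (W : Submodule ℂ V) (h : RInv ρ N W) :
    Representation ℂ N W where
  toFun n := (ρ n).restrict (fun v hv => h n n.2 v hv)
  map_one' := by ext v; simp
  map_mul' a b := by ext v; simp

section Transfer

variable {G : Type*} [Group G] {V : Type*} [AddCommGroup V] [Module ℂ V]
  (ρ : Representation ℂ G V) (N : Subgroup G) (W : Submodule ℂ V) (h : RInv ρ N W)

theorem subRep_coe (n : N) (w : W) : ((subRep ρ N W h n w : W) : V) = ρ n w := rfl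

theorem rinv_subRep (H : Subgroup G) (hH : H ≤ N) (S : Submodule ℂ W) :
    RInv (subRep ρ N W h) (H.subgroupOf N) S ↔ RInv ρ H (S.map W.subtype) := by
  constructor
  · rintro hi n hn _ ⟨v, hv, rfl⟩
    exact ⟨_, hi ⟨n, hH hn⟩ hn v hv, rfl⟩
  · intro hi n hn v hv
    obtain ⟨w, hw, hw2⟩ := hi n hn v ⟨v, hv, rfl⟩
    have : w = subRep ρ N W h n v := Subtype.ext hw2
    rwa [← this]

theorem rsimp_subRep (H : Subgroup G) (hH : H ≤ N) (S : Submodule ℂ W) :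
    RSimp (subRep ρ N W h) (H.subgroupOf N) S ↔ RSimp ρ H (S.map W.subtype) := by
  have hinj := Submodule.map_injective_of_injective W.subtype_injective
  constructor
  · rintro ⟨h1, h2, h3⟩
    refine ⟨(rinv_subRep ρ N W h H hH S).1 h1, fun h0 => h2 (hinj (by simpa using h0)), ?_⟩
    intro T hT hTi
    have hTm : (T.comap W.subtype).map W.subtype = T := by
      rw [Submodule.map_comap_subtype, inf_eq_right]
      exact hT.trans (Submodule.map_subtype_le W S)
    have := h3 (T.comap W.subtype) (by
      rw [← Submodule.map_le_map_iff_of_injective W.subtype_injective, hTm]; exact hT)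
      ((rinv_subRep ρ N W h H hH _).2 (by rwa [hTm]))
    rcases this with h4 | h4
    · left; rw [← hTm, h4, Submodule.map_bot]
    · right; rw [← hTm, h4]
  · rintro ⟨h1, h2, h3⟩
    refine ⟨(rinv_subRep ρ N W h H hH S).2 h1, ?_, ?_⟩
    · rintro rfl; simp at h2
    · intro T hT hTi
      rcases h3 (T.map W.subtype) (Submodule.map_mono hT) ((rinv_subRep ρ N W h H hH _).1 hTi)
        with h4 | h4
      · left; exact hinj (by simpa using h4)
      · right; exact hinj h4

end Transfer

theorem clifford_step {G : Type*} [Group G] [Finite G] {V : Type*} [AddCommGroup V] [Module ℂ V]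
    [FiniteDimensional ℂ V] (ρ : Representation ℂ G V) (N M : Subgroup G) [hM : M.Normal]
    (hMN : M ≤ N) (x : G) (hxN : x ∈ N)
    (hgen : N ≤ M ⊔ Subgroup.zpowers x) (p : ℕ) (hp : p.Prime) (hxp : x ^ p ∈ M)
    (W : Submodule ℂ V) (hs : RSimp ρ N W) (hns : ¬ RSimp ρ M W) :
    (∃ f : V →ₗ[ℂ] V, (∀ m ∈ M, ∀ v, f (ρ m v) = ρ m (f v)) ∧ ∃ v, f (ρ x v) ≠ ρ x (f v)) ∧
      ∃ U : Submodule ℂ V, RSimp ρ M U ∧ Module.finrank ℂ W = p * Module.finrank ℂ U := by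
  have hgen' : M.subgroupOf N ⊔ Subgroup.zpowers (⟨x, hxN⟩ : N) = ⊤ := by
    rw [eq_top_iff]
    rintro ⟨n, hn⟩ -
    have h1 := hgen hn
    rw [Subgroup.mem_sup_of_normal_left] at h1 ⊢
    obtain ⟨m, hm, y, hy, rfl⟩ := h1
    obtain ⟨k, rfl⟩ := hy
    exact ⟨⟨m, hMN hm⟩, hm, ⟨x, hxN⟩ ^ k, ⟨k, rfl⟩, by ext; simp⟩
  have hs' : RSimp (subRep ρ N W hs.inv) ⊤ ⊤ := by
    have := (rsimp_subRep ρ N W hs.inv N le_rfl ⊤).2 (by simpa using hs)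
    simpa using this
  have hns' : ¬ RSimp (subRep ρ N W hs.inv) (M.subgroupOf N) ⊤ := by
    intro h
    have := (rsimp_subRep ρ N W hs.inv M hMN ⊤).1 h
    exact hns (by simpa using this)
  obtain ⟨a, ha, ⟨v, hv⟩, U, hU, hdim⟩ := clifford_key (subRep ρ N W hs.inv) (M.subgroupOf N)
    ⟨x, hxN⟩ hgen' p hp hxp hs' hns'
  refine ⟨?_, U.map W.subtype, (rsimp_subRep ρ N W hs.inv M hMN U).1 hU, ?_⟩
  · obtain ⟨π, h1, h2, h3⟩ := maschke_proj ρ N W hs.inv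
    refine ⟨W.subtype ∘ₗ a ∘ₗ π.codRestrict W h2, ?_, v, ?_⟩
    · intro m hm u
      have h4 : π.codRestrict W h2 (ρ m u) =
          subRep ρ N W hs.inv ⟨m, hMN hm⟩ (π.codRestrict W h2 u) :=
        Subtype.ext (h1 m (hMN hm) u)
      simp only [LinearMap.comp_apply]
      rw [h4, ha ⟨m, hMN hm⟩ hm]
      rfl
    · have h4 : ∀ w : W, π.codRestrict W h2 w = w := fun w => Subtype.ext (h3 w w.2)
      intro h5
      apply hv
      apply Subtype.ext
      have h6 := h4 (subRep ρ N W hs.inv ⟨x, hxN⟩ v)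
      rw [subRep_coe] at h6
      simp only [LinearMap.comp_apply, h4] at h5
      rw [h6] at h5
      exact h5
  · rw [hdim, LinearEquiv.finrank_eq (Submodule.equivMapOfInjective W.subtype
      W.subtype_injective U)]

theorem zpowers_pow_normal {Q : Type*} [Group Q] (y : Q) (h : (Subgroup.zpowers y).Normal)
    (p : ℕ) : (Subgroup.zpowers (y ^ p)).Normal := by
  constructor
  rintro _ ⟨k, rfl⟩ g
  obtain ⟨j, hj⟩ := h.conj_mem y (Subgroup.mem_zpowers y) g
  refine ⟨j * k, ?_⟩
  have h1 : g * (y ^ p) ^ k * g⁻¹ = ((g * y * g⁻¹) ^ p) ^ k := by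
    rw [conj_pow, conj_zpow]
  have hj' : y ^ j = g * y * g⁻¹ := hj
  simp only
  rw [h1, ← hj', ← zpow_natCast, ← zpow_natCast, ← zpow_mul, ← zpow_mul, ← zpow_mul]
  congr 1
  ring

theorem supersolvable_step (G : Type) [Group G] [Finite G] (hss : IsSupersolvableGroup G)
    (N : Subgroup G) [hN : N.Normal] (hne : N ≠ ⊥) :
    ∃ M : Subgroup G, M.Normal ∧ M < N ∧ ∃ x ∈ N, ∃ p : ℕ, p.Prime ∧ x ^ p ∈ M ∧
      N ≤ M ⊔ Subgroup.zpowers x := by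
  obtain ⟨n, H, hHn, -, h0, hlast, hstep⟩ := hss
  obtain ⟨i, hi1, hi2⟩ : ∃ i : Fin n, N ≤ H i.succ ∧ ¬ N ≤ H i.castSucc := by
    by_contra! hc
    have : ∀ i, N ≤ H i := by
      intro i
      induction i using Fin.reverseInduction with
      | last => rw [hlast]; exact le_top
      | cast i ih => exact hc i ih
    have h := this 0
    rw [h0, le_bot_iff] at h
    exact hne h
  obtain ⟨g, -, hg⟩ := hstep i
  set L := H i.castSucc with hL
  have hLn : L.Normal := hHn _
  obtain ⟨y, hyN, hy⟩ : ∃ y ∈ N, ∀ m ∈ N, ∃ k : ℤ, m * (y ^ k)⁻¹ ∈ L := by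
    have hle : N.map (QuotientGroup.mk' L) ≤ Subgroup.zpowers (QuotientGroup.mk' L g) := by
      rintro _ ⟨m, hm, rfl⟩
      have h1 := hg (hi1 hm)
      rw [Subgroup.mem_sup_of_normal_left] at h1
      obtain ⟨l, hl, z, ⟨k, rfl⟩, rfl⟩ := h1
      refine ⟨k, ?_⟩
      have : QuotientGroup.mk' L l = 1 := by simpa using hl
      simp only [map_mul, map_zpow, this, one_mul]
    obtain ⟨j, hj⟩ := (Subgroup.le_zpowers_iff _ _).1 hle
    have hz : QuotientGroup.mk' L g ^ j ∈ N.map (QuotientGroup.mk' L) := by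
      rw [hj]; exact Subgroup.mem_zpowers _
    obtain ⟨y, hy, hy2⟩ := hz
    refine ⟨y, hy, fun m hm => ?_⟩
    have h3 : QuotientGroup.mk' L m ∈ N.map (QuotientGroup.mk' L) := ⟨m, hm, rfl⟩
    rw [hj, ← hy2] at h3
    obtain ⟨k, hk⟩ := h3
    refine ⟨k, ?_⟩
    have hk' : QuotientGroup.mk' L y ^ k = QuotientGroup.mk' L m := hk
    rw [← QuotientGroup.ker_mk' L, MonoidHom.mem_ker, map_mul, map_inv, map_zpow, hk']
    simp
  set K := N ⊓ L with hK
  have hKn : K.Normal := inferInstance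
  set q := QuotientGroup.mk' K with hq
  have hqs : Function.Surjective q := QuotientGroup.mk'_surjective K
  have hmap : N.map q = Subgroup.zpowers (q y) := by
    apply le_antisymm
    · rintro _ ⟨m, hm, rfl⟩
      obtain ⟨k, hk⟩ := hy m hm
      refine ⟨k, ?_⟩
      have h1 : m * (y ^ k)⁻¹ ∈ q.ker := by
        rw [hq, QuotientGroup.ker_mk']
        exact ⟨N.mul_mem hm (N.inv_mem (N.zpow_mem hyN k)), hk⟩
      rw [MonoidHom.mem_ker, map_mul, map_inv, map_zpow, mul_inv_eq_one] at h1
      exact h1.symm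
    · rw [Subgroup.zpowers_le]
      exact ⟨y, hyN, rfl⟩
  have hcm : (N.map q).comap q = N := by
    rw [Subgroup.comap_map_eq, hq, QuotientGroup.ker_mk', sup_eq_left]
    exact inf_le_left
  have hzn : (Subgroup.zpowers (q y)).Normal := by
    rw [← hmap]; exact hN.map q hqs
  have hy1 : q y ≠ 1 := by
    intro h
    apply hi2
    have hbot : N.map q = ⊥ := by rw [hmap, h, Subgroup.zpowers_one_eq_bot]
    rw [Subgroup.map_eq_bot_iff, hq, QuotientGroup.ker_mk'] at hbot
    exact hbot.trans inf_le_right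
  set r := orderOf (q y) with hr
  have hr1 : r ≠ 1 := by rwa [hr, Ne, orderOf_eq_one_iff]
  have hp := Nat.minFac_prime hr1
  set p := r.minFac with hpdef
  refine ⟨(Subgroup.zpowers (q y ^ p)).comap q, (zpowers_pow_normal _ hzn p).comap q, ?_, y, hyN,
    p, hp, ?_, ?_⟩
  · refine lt_of_le_of_ne ?_ ?_
    · rw [← hcm]
      apply Subgroup.comap_mono
      rw [hmap, Subgroup.zpowers_le]
      exact Subgroup.pow_mem _ (Subgroup.mem_zpowers _) _
    · intro h
      have h1 : y ∈ (Subgroup.zpowers (q y ^ p)).comap q := by rw [h]; exact hyN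
      obtain ⟨k, hk⟩ := h1
      have hk' : (q y ^ p) ^ k = q y := hk
      have h2 : q y ^ ((p : ℤ) * k - 1) = 1 := by
        rw [zpow_sub_one, zpow_mul, zpow_natCast, hk', mul_inv_cancel]
      have h3 : (r : ℤ) ∣ (p : ℤ) * k - 1 := orderOf_dvd_iff_zpow_eq_one.2 h2
      have h4 : (p : ℤ) ∣ (p : ℤ) * k - 1 :=
        (Int.natCast_dvd_natCast.2 (Nat.minFac_dvd r)).trans h3
      have h5 : (p : ℤ) ∣ 1 := by
        have := dvd_sub (Dvd.intro k rfl : (p : ℤ) ∣ p * k) h4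
        simpa using this
      have h6 : p ∣ 1 := by exact_mod_cast h5
      exact hp.one_lt.ne' (Nat.dvd_one.1 h6)
  · rw [Subgroup.mem_comap, map_pow]
    exact Subgroup.mem_zpowers _
  · intro m hm
    have h1 : q m ∈ Subgroup.zpowers (q y) := by rw [← hmap]; exact ⟨m, hm, rfl⟩
    obtain ⟨k, hk⟩ := h1
    have hk' : q y ^ k = q m := hk
    have h2 : m = (m * (y ^ k)⁻¹) * y ^ k := by group
    rw [h2]
    refine Subgroup.mul_mem_sup ?_ ⟨k, rfl⟩
    rw [Subgroup.mem_comap, map_mul, map_inv, map_zpow, hk', mul_inv_cancel]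
    exact Subgroup.one_mem _

open scoped ComplexOrder in
theorem matrix_rep_trace_inv {G : Type*} [Group G] [Fintype G] {n : Type*} [Fintype n]
    [DecidableEq n] (A : G →* Matrix n n ℂ) (g : G) :
    (A g⁻¹).trace = star (A g).trace := by
  set P : Matrix n n ℂ := ∑ h : G, (A h).conjTranspose * A h with hP
  have hAu : ∀ h, IsUnit (A h) := fun h => (Group.isUnit h).map A
  have hPD : P.PosDef := by
    refine Matrix.posDef_sum Finset.univ_nonempty fun h _ => ?_
    exact Matrix.PosDef.conjTranspose_mul_self _ (Matrix.mulVec_injective_of_isUnit (hAu h))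
  have hPu : IsUnit P.det := (Matrix.isUnit_iff_isUnit_det _).1 hPD.isUnit
  have hinv : (A g).conjTranspose * P * A g = P := by
    rw [hP, Finset.mul_sum, Finset.sum_mul]
    refine Fintype.sum_equiv (Equiv.mulRight g) _ _ fun h => ?_
    simp [Matrix.conjTranspose_mul, Matrix.mul_assoc]
  have h1 : (A g).conjTranspose * P = P * A g⁻¹ := by
    conv_rhs => rw [← hinv]
    rw [Matrix.mul_assoc _ (A g), ← map_mul]
    simp
  have h2 : A g⁻¹ = P⁻¹ * ((A g).conjTranspose * P) := by
    rw [h1, ← Matrix.mul_assoc, Matrix.nonsing_inv_mul _ hPu, Matrix.one_mul]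
  rw [h2, Matrix.trace_mul_comm, Matrix.mul_assoc, Matrix.mul_nonsing_inv _ hPu, Matrix.mul_one,
    Matrix.trace_conjTranspose]

theorem rep_char_inv {G : Type*} [Group G] [Fintype G] {V : Type*} [AddCommGroup V] [Module ℂ V]
    [FiniteDimensional ℂ V] (ρ : Representation ℂ G V) (g : G) :
    ρ.character g⁻¹ = (starRingEnd ℂ) (ρ.character g) := by
  let b := Module.finBasis ℂ V
  let A : G →* Matrix _ _ ℂ := (MonoidHomClass.toMonoidHom (LinearMap.toMatrixAlgEquiv b)).comp ρ
  have h := matrix_rep_trace_inv A g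
  have h2 : ∀ g, ρ.character g = (A g).trace := fun g =>
    LinearMap.trace_eq_matrix_trace ℂ b (ρ g)
  rw [h2, h2, h]
  rfl

theorem mem_inv_linHom {G : Type*} [Group G] {V W : Type*} [AddCommGroup V]
    [Module ℂ V] [AddCommGroup W] [Module ℂ W] (ρ : Representation ℂ G V)
    (σ : Representation ℂ G W) (f : V →ₗ[ℂ] W) :
    f ∈ (Representation.linHom ρ σ).invariants ↔ ∀ g v, f (ρ g v) = σ g (f v) := by
  rw [Representation.mem_invariants]
  constructor
  · intro h g v
    have := LinearMap.congr_fun (h g) (ρ g v)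
    simp only [Representation.linHom_apply, LinearMap.comp_apply] at this
    rw [← this]
    simp
  · intro h g
    ext v
    simp only [Representation.linHom_apply, LinearMap.comp_apply]
    rw [h]
    simp

theorem simple_rsimp {G : Type} [Group G] [Fintype G] (V : FDRep ℂ G)
    [hV : CategoryTheory.Simple V] : RSimp V.ρ ⊤ ⊤ := by
  have h1 : Module.finrank ℂ (V ⟶ V) = 1 := (FDRep.simple_iff_end_is_rank_one V).1 hV
  rw [← LinearEquiv.finrank_eq (Representation.linHom.invariantsEquivFDRepHom V V)] at h1
  have hne : (⊤ : Submodule ℂ V) ≠ ⊥ := by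
    intro h
    have hsub : Subsingleton V := (Submodule.subsingleton_iff ℂ).1 (subsingleton_of_bot_eq_top h.symm)
    have : Subsingleton (Representation.linHom V.ρ V.ρ).invariants := by
      constructor
      rintro ⟨f, _⟩ ⟨g, _⟩
      apply Subtype.ext
      ext v
      exact Subsingleton.elim _ _
    rw [Module.finrank_zero_of_subsingleton] at h1
    exact zero_ne_one h1
  refine ⟨fun _ _ _ _ => trivial, hne, fun S _ hS => ?_⟩
  obtain ⟨π, h2, h3, h4⟩ := maschke_proj V.ρ ⊤ S hS
  have hid : (LinearMap.id : V →ₗ[ℂ] V) ∈ (Representation.linHom V.ρ V.ρ).invariants :=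
    (mem_inv_linHom _ _ _).2 fun _ _ => rfl
  have hπ : π ∈ (Representation.linHom V.ρ V.ρ).invariants :=
    (mem_inv_linHom _ _ _).2 fun g v => h2 g trivial v
  have hidne : (⟨LinearMap.id, hid⟩ : (Representation.linHom V.ρ V.ρ).invariants) ≠ 0 := by
    intro h
    apply hne
    have h5 : (LinearMap.id : V →ₗ[ℂ] V) = 0 := congrArg Subtype.val h
    rw [eq_bot_iff]
    intro v _
    exact LinearMap.congr_fun h5 v
  obtain ⟨c, hc⟩ := (finrank_eq_one_iff_of_nonzero' _ hidne).1 h1 ⟨π, hπ⟩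
  have hc' : ∀ v, c • v = π v := fun v => LinearMap.congr_fun (congrArg Subtype.val hc) v
  by_cases hc0 : c = 0
  · left
    rw [eq_bot_iff]
    intro u hu
    rw [Submodule.mem_bot, ← h4 u hu, ← hc', hc0, zero_smul]
  · right
    rw [eq_top_iff]
    intro v _
    have := h3 (c⁻¹ • v)
    rwa [← hc', smul_smul, mul_inv_cancel₀ hc0, one_smul] at this

theorem rsimp_simple {G : Type} [Group G] [Fintype G] {W : Type} [AddCommGroup W] [Module ℂ W]
    [FiniteDimensional ℂ W] (σ : Representation ℂ G W) (h : RSimp σ ⊤ ⊤) :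
    CategoryTheory.Simple (FDRep.of σ) := by
  rw [FDRep.simple_iff_end_is_rank_one,
    ← LinearEquiv.finrank_eq (Representation.linHom.invariantsEquivFDRepHom _ _)]
  change Module.finrank ℂ (Representation.linHom σ σ).invariants = 1
  have hid : (LinearMap.id : W →ₗ[ℂ] W) ∈ (Representation.linHom σ σ).invariants :=
    (mem_inv_linHom _ _ _).2 fun _ _ => rfl
  have hidne : (⟨LinearMap.id, hid⟩ : (Representation.linHom σ σ).invariants) ≠ 0 := by
    intro h0
    apply h.ne
    have h5 : (LinearMap.id : W →ₗ[ℂ] W) = 0 := congrArg Subtype.val h0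
    rw [eq_bot_iff]
    intro v _
    exact LinearMap.congr_fun h5 v
  rw [finrank_eq_one_iff_of_nonzero' _ hidne]
  rintro ⟨f, hf⟩
  obtain ⟨c, hc⟩ := schur_scalar σ h f ((mem_inv_linHom _ _ _).1 hf)
  refine ⟨c, ?_⟩
  apply Subtype.ext
  ext v
  exact (hc v).symm

theorem charInner_irr (G : Type) [Group G] [Fintype G] (α β : G → ℂ) (hα : IsIrrChar G α)
    (hβ : IsIrrChar G β) : (α ≠ β → charInner G α β = 0) ∧ charInner G α α = 1 := by
  have key : ∀ V W : FDRep ℂ G, CategoryTheory.Simple V → CategoryTheory.Simple W →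
      charInner G V.character W.character = if Nonempty (V ≅ W) then 1 else 0 := by
    intro V W hV hW
    have : Invertible (Nat.card G : ℂ) := invertibleOfNonzero (by simp)
    have h := FDRep.char_orthonormal V W
    simp only [charInner]
    have h2 : ∀ g, W.character g⁻¹ = (starRingEnd ℂ) (W.character g) := fun g =>
      rep_char_inv W.ρ g
    simp only [h2] at h
    rw [← Nat.card_eq_fintype_card, h]
  obtain ⟨V, hV, rfl⟩ := hα
  obtain ⟨W, hW, rfl⟩ := hβ
  constructor
  · intro hne
    rw [key V W hV hW, if_neg]
    rintro ⟨e⟩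
    exact hne (FDRep.char_iso e)
  · rw [key V V hV hV, if_pos ⟨CategoryTheory.Iso.refl V⟩]

theorem irr_finite (G : Type) [Group G] [Fintype G] : {α : G → ℂ | IsIrrChar G α}.Finite := by
  have hli : LinearIndependent ℂ (Subtype.val : {α : G → ℂ | IsIrrChar G α} → G → ℂ) := by
    rw [linearIndependent_iff']
    intro s c hc i hi
    have h1 : charInner G (∑ j ∈ s, c j • (j : G → ℂ)) i = c i := by
      have h2 : charInner G (∑ j ∈ s, c j • (j : G → ℂ)) i =
          ∑ j ∈ s, c j * charInner G (j : G → ℂ) i := by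
        simp only [charInner, Finset.sum_apply, Pi.smul_apply, smul_eq_mul, Finset.sum_mul,
          Finset.mul_sum]
        rw [Finset.sum_comm]
        refine Finset.sum_congr rfl fun j _ => Finset.sum_congr rfl fun g _ => ?_
        ring
      rw [h2, Finset.sum_eq_single i]
      · rw [(charInner_irr G i i i.2 i.2).2, mul_one]
      · intro j _ hj
        rw [(charInner_irr G j i j.2 i.2).1 (fun h => hj (Subtype.ext h)), mul_zero]
      · intro h; exact absurd hi h
    rw [← h1, hc]
    simp [charInner]
  exact hli.setFinite

/-- The endomorphisms commuting with the subgroup `N`. -/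
def commEnd {G : Type*} [Group G] {V : Type*} [AddCommGroup V] [Module ℂ V]
    (ρ : Representation ℂ G V) (N : Subgroup G) : Submodule ℂ (V →ₗ[ℂ] V) where
  carrier := {f | ∀ n ∈ N, ∀ v, f (ρ n v) = ρ n (f v)}
  add_mem' := by
    intro f g hf hg m hm v
    simp [hf m hm v, hg m hm v]
  zero_mem' := by intro m hm v; simp
  smul_mem' := by
    intro c f hf m hm v
    simp [hf m hm v]

theorem mem_commEnd {G : Type*} [Group G] {V : Type*} [AddCommGroup V] [Module ℂ V]
    (ρ : Representation ℂ G V) (N : Subgroup G) (f : V →ₗ[ℂ] V) :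
    f ∈ commEnd ρ N ↔ ∀ n ∈ N, Representation.linHom ρ ρ n f = f := by
  constructor
  · intro h n hn
    ext v
    simp only [Representation.linHom_apply, LinearMap.comp_apply]
    rw [h _ (N.inv_mem hn)]
    simp
  · intro h n hn v
    have := LinearMap.congr_fun (h n hn) (ρ n v)
    simp only [Representation.linHom_apply, LinearMap.comp_apply] at this
    rw [← this]
    simp

theorem rinv_commEnd {G : Type*} [Group G] {V : Type*} [AddCommGroup V] [Module ℂ V]
    (ρ : Representation ℂ G V) (N : Subgroup G) [hN : N.Normal] :
    RInv (Representation.linHom ρ ρ) ⊤ (commEnd ρ N) := by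
  intro g _ f hf
  rw [mem_commEnd] at hf ⊢
  intro n hn
  have h1 := hf (g⁻¹ * n * g) (by simpa using hN.conj_mem n hn g⁻¹)
  rw [← Module.End.mul_apply, ← map_mul]
  have h2 : n * g = g * (g⁻¹ * n * g) := by group
  rw [h2, map_mul, Module.End.mul_apply, h1]

theorem exists_rsimp_le {G : Type*} [Group G] {V : Type*} [AddCommGroup V] [Module ℂ V]
    [FiniteDimensional ℂ V] (ρ : Representation ℂ G V) (N : Subgroup G) (X : Submodule ℂ V)
    (hX : RInv ρ N X) (hX0 : X ≠ ⊥) : ∃ W ≤ X, RSimp ρ N W := by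
  obtain ⟨W, hWX, hW⟩ := exists_minimal_le_of_wellFoundedLT
    (fun W : Submodule ℂ V => RInv ρ N W ∧ W ≠ ⊥) X ⟨hX, hX0⟩
  refine ⟨W, hWX, hW.prop.1, hW.prop.2, fun S hS hSi => ?_⟩
  by_cases h0 : S = ⊥
  · exact Or.inl h0
  · exact Or.inr (le_antisymm hS (hW.le_of_le ⟨hSi, h0⟩ hS))

/-- The constituents of `χ * conj χ` which are not trivial on `N`. -/
def constOn (G : Type) [Group G] [Fintype G] (χ : G → ℂ) (N : Subgroup G) : Set (G → ℂ) :=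
  {α | IsIrrChar G α ∧ (∃ n ∈ N, α n ≠ α 1) ∧
    charInner G (fun g => χ g * (starRingEnd ℂ) (χ g)) α ≠ 0}

theorem constOn_finite (G : Type) [Group G] [Fintype G] (χ : G → ℂ) (N : Subgroup G) :
    (constOn G χ N).Finite :=
  (irr_finite G).subset fun _ h => h.1

theorem constOn_mono (G : Type) [Group G] [Fintype G] (χ : G → ℂ) {M N : Subgroup G}
    (h : M ≤ N) : constOn G χ M ⊆ constOn G χ N := by
  rintro α ⟨h1, ⟨n, hn, hne⟩, h2⟩
  exact ⟨h1, ⟨n, h hn, hne⟩, h2⟩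

theorem new_constituent {G : Type} [Group G] [Fintype G] {V : Type} [AddCommGroup V] [Module ℂ V]
    [FiniteDimensional ℂ V] (ρ : Representation ℂ G V) (M N : Subgroup G) [M.Normal] [N.Normal]
    (hMN : M ≤ N) (f : V →ₗ[ℂ] V) (hf : f ∈ commEnd ρ M) (hfN : f ∉ commEnd ρ N) :
    (constOn G ρ.character M).ncard + 1 ≤ (constOn G ρ.character N).ncard := by
  set τ := Representation.linHom ρ ρ with hτ
  obtain ⟨π, h1, h2, h3⟩ := maschke_proj τ ⊤ (commEnd ρ N) (rinv_commEnd ρ N)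
  have hNM : commEnd ρ N ≤ commEnd ρ M := fun f hf n hn v => hf n (hMN hn) v
  set X : Submodule ℂ (V →ₗ[ℂ] V) := commEnd ρ M ⊓ LinearMap.ker π with hX
  have hXi : RInv τ ⊤ X := by
    rintro g hg u ⟨hu1, hu2⟩
    refine ⟨rinv_commEnd ρ M g hg u hu1, ?_⟩
    have hu2' : π u = 0 := hu2
    change π (τ g u) = 0
    rw [h1 g hg, hu2', map_zero]
  have hX0 : X ≠ ⊥ := by
    intro h
    have h4 : f - π f ∈ X := by
      refine ⟨(commEnd ρ M).sub_mem hf (hNM (h2 f)), ?_⟩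
      change π (f - π f) = 0
      rw [map_sub, h3 _ (h2 f), sub_self]
    rw [h, Submodule.mem_bot, sub_eq_zero] at h4
    exact hfN (h4 ▸ h2 f)
  obtain ⟨W, hWX, hW⟩ := exists_rsimp_le τ ⊤ X hXi hX0
  let σ : Representation ℂ G W :=
    (subRep τ ⊤ W hW.inv).comp (Subgroup.topEquiv (G := G)).symm.toMonoidHom
  have hσ : ∀ g (w : W), ((σ g w : W) : V →ₗ[ℂ] V) = τ g w := fun _ _ => rfl
  have hσs : RSimp σ ⊤ ⊤ := by
    have h5 : RSimp (subRep τ ⊤ W hW.inv) ⊤ ⊤ := by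
      have := (rsimp_subRep τ ⊤ W hW.inv ⊤ le_rfl ⊤).2 (by simpa using hW)
      simpa using this
    refine ⟨fun _ _ _ _ => trivial, h5.ne, fun S hS hSi => h5.simple S hS ?_⟩
    intro n _ u hu
    exact hSi n trivial u hu
  have hne : Module.finrank ℂ W ≠ 0 := by
    intro h
    exact hW.ne (Submodule.finrank_eq_zero.1 h)
  have hirr : IsIrrChar G σ.character := ⟨FDRep.of σ, rsimp_simple σ hσs, rfl⟩
  have hM1 : ∀ m ∈ M, σ.character m = σ.character 1 := by
    intro m hm
    have : σ m = σ 1 := by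
      ext1 w
      apply Subtype.ext
      rw [hσ, (mem_commEnd ρ M _).1 (hWX w.2).1 m hm]
      simp
    simp only [Representation.character, this]
  have hN1 : ∃ n ∈ N, σ.character n ≠ σ.character 1 := by
    by_contra! hc
    have : Invertible (Nat.card N : ℂ) := invertibleOfNonzero (by simp)
    let σN : Representation ℂ N W := σ.comp N.subtype
    have h6 := Representation.card_inv_mul_sum_char_eq_finrank σN
    have h7 : ∀ n : N, σN.character n = Module.finrank ℂ W := by
      intro n
      rw [← Representation.char_one σ, ← hc n n.2]
      rfl
    have h8 : σN.invariants = ⊥ := by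
      rw [eq_bot_iff]
      intro w hw
      rw [Representation.mem_invariants] at hw
      have h9 : (w : V →ₗ[ℂ] V) ∈ commEnd ρ N := by
        rw [mem_commEnd]
        intro n hn
        exact congrArg Subtype.val (hw ⟨n, hn⟩)
      have h10 : π w = 0 := (hWX w.2).2
      rw [h3 _ h9] at h10
      exact Subtype.ext h10
    rw [h8] at h6
    simp [h7, hne] at h6
  have hin : charInner G (fun g => ρ.character g * (starRingEnd ℂ) (ρ.character g))
      σ.character ≠ 0 := by
    have : Invertible (Nat.card G : ℂ) := invertibleOfNonzero (by simp)
    have h6 := Representation.card_inv_mul_sum_char_eq_finrank (Representation.linHom σ τ)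
    have h7 : charInner G (fun g => ρ.character g * (starRingEnd ℂ) (ρ.character g))
        σ.character =
        (Module.finrank ℂ (Representation.linHom σ τ).invariants : ℂ) := by
      rw [← h6]
      simp only [charInner, Nat.card_eq_fintype_card]
      congr 1
      refine Finset.sum_congr rfl fun g _ => ?_
      rw [Representation.char_linHom, hτ, Representation.char_linHom, rep_char_inv, rep_char_inv]
      ring
    rw [h7]
    intro h8
    have h9 : (Representation.linHom σ τ).invariants = ⊥ :=
      Submodule.finrank_eq_zero.1 (by exact_mod_cast h8)
    have h10 : W.subtype ∈ (Representation.linHom σ τ).invariants :=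
      (mem_inv_linHom _ _ _).2 fun g v => hσ g v
    rw [h9, Submodule.mem_bot] at h10
    apply hW.ne
    rw [← Submodule.range_subtype W, h10, LinearMap.range_zero]
  have hnew : σ.character ∉ constOn G ρ.character M := by
    rintro ⟨-, ⟨m, hm, hm2⟩, -⟩
    exact hm2 (hM1 m hm)
  rw [← Set.ncard_insert_of_notMem hnew (constOn_finite G _ M)]
  refine Set.ncard_le_ncard ?_ (constOn_finite G _ N)
  exact Set.insert_subset ⟨hirr, hN1, hin⟩ (constOn_mono G _ hMN)

theorem span_eq_of_rsimp {G : Type*} [Group G] {V : Type*} [AddCommGroup V]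
    [Module ℂ V] (ρ : Representation ℂ G V) (N : Subgroup G) (W : Submodule ℂ V)
    (hW : RSimp ρ N W) (w : V) (hwW : w ∈ W) (hw : w ≠ 0) (hi : RInv ρ N (ℂ ∙ w)) :
    Module.finrank ℂ W = 1 := by
  rcases hW.simple (ℂ ∙ w) (by simpa using hwW) hi with h | h
  · exact absurd (Submodule.span_singleton_eq_bot.1 h) hw
  · rw [← h, finrank_span_singleton hw]

theorem main_induction {G : Type} [Group G] [Fintype G] (hss : IsSupersolvableGroup G) {V : Type}
    [AddCommGroup V] [Module ℂ V] [FiniteDimensional ℂ V] (ρ : Representation ℂ G V) (m : ℕ) :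
    ∀ (N : Subgroup G), N.Normal → ∀ W : Submodule ℂ V, RSimp ρ N W →
      Module.finrank ℂ W = m → 1 < m →
      m.primeFactorsList.length + 1 ≤ (constOn G ρ.character N).ncard := by
  induction m using Nat.strong_induction_on with
  | _ m ih =>
  intro N₀ hN₀ W hW₀ hWm hm
  obtain ⟨N, hNN₀, hNmin⟩ := exists_minimal_le_of_wellFoundedLT
    (fun N : Subgroup G => N.Normal ∧ RSimp ρ N W) N₀ ⟨hN₀, hW₀⟩
  obtain ⟨hN, hW⟩ := hNmin.prop
  have hNbot : N ≠ ⊥ := by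
    rintro rfl
    obtain ⟨w, hwW, hw⟩ := Submodule.exists_mem_ne_zero_of_ne_bot hW.ne
    have := span_eq_of_rsimp ρ ⊥ W hW w hwW hw (by
      intro n hn u hu
      rw [Subgroup.mem_bot] at hn
      simpa [hn] using hu)
    omega
  obtain ⟨M, hM, hMN, x, hxN, p, hp, hxp, hgen⟩ := supersolvable_step G hss N hNbot
  have hns : ¬ RSimp ρ M W := fun h => absurd (hNmin.le_of_le ⟨hM, h⟩ hMN.le) (not_le_of_gt hMN)
  obtain ⟨⟨f, hf, v, hv⟩, U, hU, hdim⟩ :=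
    clifford_step ρ N M hMN.le x hxN hgen p hp hxp W hW hns
  have hnew := new_constituent ρ M N hMN.le f hf (fun h => hv (h x hxN v))
  have hmono := Set.ncard_le_ncard (constOn_mono G ρ.character hNN₀) (constOn_finite G _ N₀)
  have hU0 : Module.finrank ℂ U ≠ 0 := fun h => hU.ne (Submodule.finrank_eq_zero.1 h)
  rw [hWm] at hdim
  have hlen : m.primeFactorsList.length = 1 + (Module.finrank ℂ U).primeFactorsList.length := by
    rw [hdim, (Nat.perm_primeFactorsList_mul hp.ne_zero hU0).length_eq, List.length_append,
      Nat.primeFactorsList_prime hp]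
    rfl
  by_cases hU1 : 1 < Module.finrank ℂ U
  · have := ih (Module.finrank ℂ U) (by rw [hdim]; nlinarith [hp.two_le]) M hM U hU rfl hU1
    omega
  · have hU1 : Module.finrank ℂ U = 1 := by omega
    suffices h : 1 ≤ (constOn G ρ.character M).ncard by
      rw [hU1] at hlen
      simp at hlen
      omega
    obtain ⟨f', hf'⟩ : ∃ f', f' ∉ commEnd ρ M := by
      by_contra! hc
      have hWnt : Nontrivial W := Submodule.nontrivial_iff_ne_bot.2 hW.ne
      obtain ⟨μ, hμ⟩ := Module.End.exists_eigenvalue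
        ((ρ x).restrict (fun v hv => hW.inv x hxN v hv))
      obtain ⟨⟨w, hwW⟩, hwe⟩ := hμ.exists_hasEigenvector
      have hwx : ρ x w = μ • w := congrArg Subtype.val hwe.apply_eq_smul
      have hw0 : w ≠ 0 := fun h => hwe.2 (Subtype.ext h)
      have h1 : Module.finrank ℂ W = 1 := by
        apply span_eq_of_rsimp ρ N W hW w hwW hw0
        have h2 : RInv ρ (M ⊔ Subgroup.zpowers x) (ℂ ∙ w) := by
          apply rinv_sup_of_gen
          · intro n hn u hu
            obtain ⟨π, -, h3, h4⟩ := maschke_proj ρ ⊥ (ℂ ∙ w) (by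
              intro n hn u hu
              rw [Subgroup.mem_bot] at hn
              simpa [hn] using hu)
            have h5 := hc π n hn u
            rw [h4 u hu] at h5
            rw [← h5]
            exact h3 _
          · intro u hu
            obtain ⟨c, rfl⟩ := Submodule.mem_span_singleton.1 hu
            rw [map_smul, hwx, smul_smul]
            exact Submodule.smul_mem _ _ (Submodule.mem_span_singleton_self w)
        exact fun n hn => h2 n (hgen hn)
      omega
    have := new_constituent ρ ⊥ M bot_le f' (by
      intro n hn v
      rw [Subgroup.mem_bot] at hn
      simp [hn]) hf'
    omega

/-- Theorem B, second part: for supersolvable `G` and `χ(1) > 1`, the degree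
`χ(1)` is a product of at most `η(χ) - 1` primes counted with multiplicity. -/
theorem omega_degree_le_eta_sub_one (G : Type) [Group G] [Fintype G]
    (hss : IsSupersolvableGroup G) (χ : G → ℂ) (hχ : IsIrrChar G χ)
    (d : ℕ) (hd : χ 1 = (d : ℂ)) (hdeg : 1 < d) :
    d.primeFactorsList.length ≤ etaChar G χ - 1 := by
  obtain ⟨V, hV, rfl⟩ := hχ
  have hfr : Module.finrank ℂ V = d := by
    rw [FDRep.char_one] at hd
    exact_mod_cast hd
  have h := main_induction hss V.ρ d ⊤ inferInstance ⊤ (simple_rsimp V)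
    (by rw [finrank_top, hfr]) hdeg
  have hle : (constOn G (Representation.character V.ρ) ⊤).ncard ≤ etaChar G V.character := by
    refine Set.ncard_le_ncard ?_ ((irr_finite G).subset fun _ h => h.1)
    rintro α ⟨h1, ⟨n, -, hne⟩, h2⟩
    refine ⟨h1, ?_, h2⟩
    rintro rfl
    exact hne rfl
  omega
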